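/- arXiv:2311.09992 — 3 statements merged into one kernel-verified Lean document; each statement's English description precedes it below -/
import Mathlib

section
/- (Main Theorem, case q a prime power) Let q ≥ 2 be an integer which is a power of a prime. Then for every parameter tuple (n,m,k,l) as in the context and every x ∈ {0,1,…,m}, one has p(x;q) ≥ 0; consequently, since Σ_{x=0}^{m} p(x;q) = 1, the function x ↦ p(x;q) is the probability mass function of a probability distribution (the q-Racah probability distribution P_{n,m,k,l;q}) on the finite set {0,1,…,m}. -/
open Finset

/-- The `q`-integer `[j]_q = 1 + q + ⋯ + q^(j-1)`. -/
noncomputable def qint (q : ℝ) (j : ℕ) : ℝ := ∑ i ∈ Finset.range j, q ^ i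

/-- The `q`-factorial `[j]_q! = [1]_q [2]_q ⋯ [j]_q`. -/
noncomputable def qfact (q : ℝ) (j : ℕ) : ℝ := ∏ i ∈ Finset.range j, qint q (i + 1)

/-- The `q`-binomial coefficient `C_q(a,b)`. -/
noncomputable def qbinom (q : ℝ) (a b : ℕ) : ℝ :=
  if b ≤ a then qfact q a / (qfact q b * qfact q (a - b)) else 0

/-- The `q`-Pochhammer symbol `(a;q)_r = (1-a)(1-aq)⋯(1-aq^(r-1))`. -/
noncomputable def qpoch (a q : ℝ) (r : ℕ) : ℝ := ∏ i ∈ Finset.range r, (1 - a * q ^ i)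

/-- The `r`-th term of the terminating balanced `₄φ₃`-series with numerator parameters
`q^a, q^b, q^(-M), q^(-N)`, denominator parameters `q^(-m), q^(m-n), q^(-M-N)`,
base `q` and argument `q`. -/
noncomputable def hypTerm (q : ℝ) (n m M N : ℕ) (a b : ℤ) (r : ℕ) : ℝ :=
  (qpoch (q ^ a) q r * qpoch (q ^ b) q r * qpoch (q ^ (-(M : ℤ))) q r *
      qpoch (q ^ (-(N : ℤ))) q r * q ^ r) /
    (qpoch q q r * qpoch (q ^ (-(m : ℤ))) q r * qpoch (q ^ ((m : ℤ) - n)) q r *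
      qpoch (q ^ (-(M : ℤ) - N)) q r)

/-- The function `p(x;q)` of Definition 1.1 (in its `₄φ₃`-series form), with
`M = m - l` and `N = n - m - k + l`. -/
noncomputable def pq (q : ℝ) (n m k l x : ℕ) : ℝ :=
  qbinom q (n - k) (m - l) * (qbinom q n x / qbinom q n m) * q ^ x *
    (qint q (n - 2 * x + 1) / qint q (n - x + 1)) *
    ∑ r ∈ Finset.range (min x (min (m - l) (n + l - m - k)) + 1),
      hypTerm q n m (m - l) (n + l - m - k) (-(x : ℤ)) ((x : ℤ) - n - 1) r

lemma qpoch_zero' (a q : ℝ) : qpoch a q 0 = 1 := by simp [qpoch]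

lemma qpoch_succ (a q : ℝ) (r : ℕ) : qpoch a q (r+1) = qpoch a q r * (1 - a * q ^ r) := by
  simp [qpoch, Finset.prod_range_succ]

lemma qpoch_succ' (a q : ℝ) (r : ℕ) : qpoch a q (r+1) = (1 - a) * qpoch (a * q) q r := by
  simp only [qpoch, Finset.prod_range_succ']
  rw [mul_comm]
  congr 1
  · simp
  · apply Finset.prod_congr rfl
    intro i _
    ring

lemma qpoch_shift (a q : ℝ) (r : ℕ) :
    (1 - a) * qpoch (a * q) q r = qpoch a q r * (1 - a * q ^ r) := by
  rw [← qpoch_succ', qpoch_succ]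

lemma qpoch_neg_eq_zero {q : ℝ} (hq : 1 < q) {a r : ℕ} (h : a < r) :
    qpoch (q ^ (-(a:ℤ))) q r = 0 := by
  unfold qpoch
  apply Finset.prod_eq_zero (Finset.mem_range.2 h)
  rw [zpow_neg, zpow_natCast, inv_mul_cancel₀ (by positivity), sub_self]

lemma one_sub_zpow_pos {q : ℝ} (hq : 1 < q) {a : ℤ} (h : a < 0) : 0 < 1 - q ^ a := by
  have := zpow_lt_one_of_neg₀ hq h
  linarith

lemma qpoch_neg_pos {q : ℝ} (hq : 1 < q) {a : ℤ} {r : ℕ} (h : a + r ≤ 0) :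
    0 < qpoch (q ^ a) q r := by
  unfold qpoch
  apply Finset.prod_pos
  intro i hi
  have hi := Finset.mem_range.1 hi
  rw [← zpow_natCast q i, ← zpow_add₀ (by positivity)]
  apply one_sub_zpow_pos hq
  omega

lemma qpoch_q_ne {q : ℝ} (hq : 1 < q) (r : ℕ) : qpoch q q r ≠ 0 := by
  unfold qpoch
  apply Finset.prod_ne_zero_iff.2
  intro i _
  have : 1 < q ^ (i+1) := one_lt_pow₀ hq (by omega)
  rw [pow_succ] at this
  nlinarith

/-- q-Chu-Vandermonde -/
lemma qCV {q : ℝ} (hq : 1 < q) (n : ℕ) : ∀ (b c : ℝ), b ≠ 0 → (∀ i < n, 1 - c * q ^ i ≠ 0) →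
    ∑ r ∈ Finset.range (n+1), qpoch (q ^ (-(n:ℤ))) q r * qpoch b q r * q ^ r /
      (qpoch q q r * qpoch c q r) = qpoch (c / b) q n * b ^ n / qpoch c q n := by
  have hq0 : q ≠ 0 := by positivity
  induction n with
  | zero => intro b c _ _; simp [qpoch]
  | succ n ih =>
    intro b c hb hc
    have h1 := ih b c hb (fun i hi => hc i (by omega))
    have h2 := ih (b*q) (c*q) (mul_ne_zero hb hq0) (fun i hi => by
      have := hc (i+1) (by omega)
      rw [pow_succ] at this
      convert this using 2; ring)
    have hc0 : 1 - c ≠ 0 := by simpa using hc 0 (by omega)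
    have hcn : 1 - c * q ^ n ≠ 0 := hc n (by omega)
    have hpc : ∀ r ≤ n, qpoch (c*q) q r ≠ 0 := by
      intro r hr
      unfold qpoch
      apply Finset.prod_ne_zero_iff.2
      intro i hi
      have hi := Finset.mem_range.1 hi
      have := hc (i+1) (by omega)
      rw [pow_succ] at this
      convert this using 2; ring
    have hpcn : qpoch c q n ≠ 0 := by
      unfold qpoch
      apply Finset.prod_ne_zero_iff.2
      intro i hi
      have hi := Finset.mem_range.1 hi
      exact hc i (by omega)
    have hz : qpoch (q ^ (-(n:ℤ))) q (n+1) = 0 := qpoch_neg_eq_zero hq (by omega)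
    have h1' : ∑ r ∈ Finset.range (n+1+1), qpoch (q ^ (-(n:ℤ))) q r * qpoch b q r * q ^ r /
      (qpoch q q r * qpoch c q r) = qpoch (c / b) q n * b ^ n / qpoch c q n := by
      rw [Finset.sum_range_succ, h1, hz]; simp
    have hdiff : ∑ r ∈ Finset.range (n+1+1), qpoch (q ^ (-((n+1:ℕ):ℤ))) q r * qpoch b q r * q ^ r /
      (qpoch q q r * qpoch c q r) - ∑ r ∈ Finset.range (n+1+1), qpoch (q ^ (-(n:ℤ))) q r * qpoch b q r * q ^ r /
      (qpoch q q r * qpoch c q r) = - (q ^ (-(n:ℤ)) * (1 - b) / (1 - c)) *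
        ∑ r ∈ Finset.range (n+1), qpoch (q ^ (-(n:ℤ))) q r * qpoch (b*q) q r * q ^ r /
      (qpoch q q r * qpoch (c*q) q r) := by
      rw [← Finset.sum_sub_distrib, Finset.sum_range_succ', Finset.mul_sum]
      simp only [qpoch_zero', sub_self, add_zero]
      apply Finset.sum_congr rfl
      intro r hr
      have hr := Finset.mem_range.1 hr
      have e : q ^ (-((n+1:ℕ):ℤ)) * q = q ^ (-(n:ℤ)) := by
        rw [← zpow_add_one₀ hq0]; congr 1; push_cast; ring
      have hqr := qpoch_q_ne hq r
      have hqr1 := qpoch_q_ne hq (r+1)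
      have hcr := hpc r (by omega)
      rw [qpoch_succ] at hqr1
      have hqq := right_ne_zero_of_mul hqr1
      rw [qpoch_succ' (q ^ (-((n+1:ℕ):ℤ))), e, qpoch_succ (q ^ (-(n:ℤ))), qpoch_succ' b,
        qpoch_succ' c, qpoch_succ q, ← e]
      generalize q ^ (-((n+1:ℕ):ℤ)) = X
      generalize qpoch (X * q) q r = P1
      generalize qpoch (b * q) q r = P2
      generalize qpoch (c * q) q r = P3 at *
      generalize qpoch q q r = P4 at *
      rw [pow_succ]
      generalize q ^ r = t at *
      have hqq' : 1 - t * q ≠ 0 := by rwa [mul_comm] at hqq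
      field_simp
      ring
    rw [h1', h2] at hdiff
    have hs : qpoch c q n * (1 - c * q ^ n) = (1 - c) * qpoch (c*q) q n := (qpoch_shift _ _ _).symm
    have hcq : c * q / (b * q) = c / b := by field_simp
    rw [hcq] at hdiff
    have hfin := sub_eq_iff_eq_add.1 hdiff
    rw [hfin, qpoch_succ (c/b), qpoch_succ c, mul_pow, zpow_neg, zpow_natCast]
    have hcqn := hpc n le_rfl
    have hs' : qpoch (c*q) q n = qpoch c q n * (1 - c * q ^ n) / (1 - c) := by
      rw [hs]; field_simp
    rw [hs']
    have hqn : q ^ n ≠ 0 := pow_ne_zero _ hq0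
    rw [pow_succ b]
    clear hfin hdiff hs' hs hcqn h1' h1 h2 hz ih hpc hc
    generalize qpoch (c/b) q n = P1 at *
    generalize qpoch c q n = P2 at *
    generalize q ^ n = t at *
    have hcn' : 1 - t * c ≠ 0 := by rwa [mul_comm] at hcn
    field_simp
    ring

noncomputable def FF (q : ℝ) (n m M N x : ℕ) : ℝ :=
  ∑ r ∈ Finset.range (min M N + 1), hypTerm q n m M N (-(x : ℤ)) ((x : ℤ) - n - 1) r

lemma hyp_zero {q : ℝ} (hq : 1 < q) {n m M N x r : ℕ} {b : ℤ} (h : x < r) :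
    hypTerm q n m M N (-(x:ℤ)) b r = 0 := by
  rw [hypTerm, qpoch_neg_eq_zero hq h]; simp

lemma sum_min {q : ℝ} (hq : 1 < q) (n m M N x : ℕ) :
    ∑ r ∈ Finset.range (min x (min M N) + 1), hypTerm q n m M N (-(x : ℤ)) ((x : ℤ) - n - 1) r
      = FF q n m M N x := by
  unfold FF
  apply Finset.sum_subset
  · intro r hr; simp only [Finset.mem_range] at *; omega
  · intro r hr hr'
    simp only [Finset.mem_range] at *
    exact hyp_zero hq (by omega)

lemma FF_zero {q : ℝ} (hq : 1 < q) (n m M N : ℕ) : FF q n m M N 0 = 1 := by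
  rw [← sum_min hq]
  simp [hypTerm, qpoch]

lemma FF_symm (q : ℝ) (n m M N x : ℕ) (h : m ≤ n) : FF q n m M N x = FF q n (n-m) N M x := by
  unfold FF
  rw [min_comm]
  apply Finset.sum_congr rfl
  intro r _
  unfold hypTerm
  have e1 : -((n - m : ℕ):ℤ) = (m:ℤ) - n := by omega
  have e2 : ((n - m : ℕ):ℤ) - n = -(m:ℤ) := by omega
  have e3 : -(N:ℤ) - M = -(M:ℤ) - N := by ring
  rw [e1, e2, e3]
  congr 1 <;> ring

lemma FF_base {q : ℝ} (hq : 1 < q) (M N x : ℕ) (h1 : x ≤ M) (h2 : x ≤ N) :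
    0 ≤ FF q (M+N) M M N x := by
  rcases Nat.eq_zero_or_pos x with rfl | hx
  · rw [FF_zero hq]; norm_num
  apply le_of_eq
  have hq0 : q ≠ 0 := by positivity
  have := qCV hq x (q ^ ((x:ℤ) - (M+N:ℕ) - 1)) (q ^ (-(M:ℤ) - N)) (zpow_ne_zero _ hq0) (by
    intro i hi
    rw [← zpow_natCast q i, ← zpow_add₀ hq0]
    exact (one_sub_zpow_pos hq (by omega)).ne')
  rw [← zpow_sub₀ hq0, show (-(M:ℤ) - N) - ((x:ℤ) - (M+N:ℕ) - 1) = -((x-1:ℕ):ℤ) by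
    push_cast [Nat.cast_sub hx]; ring, qpoch_neg_eq_zero hq (by omega : x - 1 < x),
    zero_mul, zero_div] at this
  rw [← sum_min hq, show min x (min M N) = x by omega, ← this]
  apply Finset.sum_congr rfl
  intro r hr
  have hr := Finset.mem_range.1 hr
  unfold hypTerm
  have a1 : qpoch (q ^ (-(M:ℤ))) q r ≠ 0 := (qpoch_neg_pos hq (by omega)).ne'
  have a2 : qpoch (q ^ (-(N:ℤ))) q r ≠ 0 := (qpoch_neg_pos hq (by omega)).ne'
  have a3 : qpoch (q ^ (-(M:ℤ)-N)) q r ≠ 0 := (qpoch_neg_pos hq (by omega)).ne'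
  have a4 := qpoch_q_ne hq r
  rw [show (M:ℤ) - (M+N:ℕ) = -(N:ℤ) by push_cast; ring]
  field_simp

lemma FF_rec {q : ℝ} (hq : 1 < q) (n m M N x : ℕ) (hM : M ≤ m) (hN : N + m ≤ n)
    (hx : x + 1 ≤ m) (hxm : x + 1 + m ≤ n + 1) :
    ∃ A B : ℝ, 0 ≤ A ∧ 0 ≤ B ∧ (x + 1 + m = n + 1 → A = 0) ∧
      FF q (n+1) m M N (x+1) = A * FF q n m M N (x+1) + B * FF q n m M N x := by
  have hq0 : q ≠ 0 := by positivity
  obtain ⟨X, hX⟩ : ∃ X, X = q ^ (-((x:ℤ)+1)) := ⟨_, rfl⟩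
  obtain ⟨Y, hY⟩ : ∃ Y, Y = q ^ ((x:ℤ) - n - 1) := ⟨_, rfl⟩
  obtain ⟨Z, hZ⟩ : ∃ Z, Z = q ^ ((m:ℤ) - n - 1) := ⟨_, rfl⟩
  have X1 : 0 < 1 - X := by rw [hX]; exact one_sub_zpow_pos hq (by omega)
  have Y1 : 0 < 1 - Y := by rw [hY]; exact one_sub_zpow_pos hq (by omega)
  have Z1 : 0 < 1 - Z := by rw [hZ]; exact one_sub_zpow_pos hq (by omega)
  have YX : 0 < X - Y := by
    rw [hX, hY, sub_pos]; exact zpow_lt_zpow_right₀ hq (by omega)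
  have ZX : 0 ≤ X - Z := by
    rw [hX, hZ, sub_nonneg]; exact zpow_le_zpow_right₀ hq.le (by omega)
  have YZ : 0 ≤ Z - Y := by
    rw [hY, hZ, sub_nonneg]; exact zpow_le_zpow_right₀ hq.le (by omega)
  refine ⟨(1-Y)*(X-Z)/((1-Z)*(X-Y)), (1-X)*(Z-Y)/((1-Z)*(X-Y)), by positivity, by positivity,
    ?_, ?_⟩
  · intro h
    have : X = Z := by rw [hX, hZ]; congr 1; omega
    rw [this]; simp
  · unfold FF
    rw [Finset.mul_sum, Finset.mul_sum, ← Finset.sum_add_distrib]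
    apply Finset.sum_congr rfl
    intro r hr
    have hr := Finset.mem_range.1 hr
    unfold hypTerm
    have e1 : q ^ (-((x+1:ℕ):ℤ)) = X := by rw [hX]; push_cast; rfl
    have e2 : q ^ (((x+1:ℕ):ℤ) - ((n+1:ℕ):ℤ) - 1) = Y := by rw [hY]; congr 1; push_cast; ring
    have e3 : q ^ (((x+1:ℕ):ℤ) - n - 1) = Y * q := by
      rw [hY, ← zpow_add_one₀ hq0]; congr 1; push_cast; ring
    have e4 : q ^ (-(x:ℤ)) = X * q := by
      rw [hX, ← zpow_add_one₀ hq0]; congr 1; ring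
    have e5 : q ^ ((m:ℤ) - ((n+1:ℕ):ℤ)) = Z := by rw [hZ]; congr 1; push_cast; ring
    have e6 : q ^ ((m:ℤ) - n) = Z * q := by
      rw [hZ, ← zpow_add_one₀ hq0]; congr 1; ring
    have a1 : qpoch (q ^ (-(m:ℤ))) q r ≠ 0 := (qpoch_neg_pos hq (by omega)).ne'
    have a2 : qpoch (Z * q) q r ≠ 0 := by rw [← e6]; exact (qpoch_neg_pos hq (by omega)).ne'
    have a2' : qpoch Z q r ≠ 0 := by rw [← e5]; exact (qpoch_neg_pos hq (by omega)).ne'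
    have a3 : qpoch (q ^ (-(M:ℤ)-N)) q r ≠ 0 := (qpoch_neg_pos hq (by omega)).ne'
    have a4 := qpoch_q_ne hq r
    have a5 : 1 - Z * q ^ r ≠ 0 := by
      rw [hZ, ← zpow_natCast q r, ← zpow_add₀ hq0]
      exact (one_sub_zpow_pos hq (by omega)).ne'
    rw [e1, e2, e3, e4, e5, e6, ← hY]
    have sX : qpoch (X*q) q r = qpoch X q r * (1 - X * q ^ r) / (1-X) := by
      rw [← qpoch_shift]; field_simp
    have sY : qpoch (Y*q) q r = qpoch Y q r * (1 - Y * q ^ r) / (1-Y) := by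
      rw [← qpoch_shift]; field_simp
    have sZ : qpoch (Z*q) q r = qpoch Z q r * (1 - Z * q ^ r) / (1-Z) := by
      rw [← qpoch_shift]; field_simp
    rw [sX, sY, sZ]
    generalize qpoch (q ^ (-(m:ℤ))) q r = P1 at *
    generalize qpoch (q ^ (-(M:ℤ)-N)) q r = P2 at *
    generalize qpoch (q ^ (-(M:ℤ))) q r = P3 at *
    generalize qpoch (q ^ (-(N:ℤ))) q r = P4 at *
    generalize qpoch q q r = P5 at *
    generalize qpoch X q r = P6 at *
    generalize qpoch Y q r = P7 at *
    generalize qpoch Z q r = P8 at *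
    generalize q ^ r = t at *
    have n1 := X1.ne'
    have n2 := Y1.ne'
    have n3 := Z1.ne'
    have n4 := YX.ne'
    have a5' : 1 - t * Z ≠ 0 := by rwa [mul_comm] at a5
    field_simp
    ring

lemma FF_nonneg {q : ℝ} (hq : 1 < q) (d : ℕ) : ∀ (n m M N x : ℕ), M ≤ m → N + m ≤ n →
    M + N + d = n → x ≤ m → x + m ≤ n → 0 ≤ FF q n m M N x := by
  induction d with
  | zero =>
    intro n m M N x h1 h2 h3 h4 h5
    obtain rfl : m = M := by omega
    obtain rfl : n = m + N := by omega
    exact FF_base hq _ _ _ h4 (by omega)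
  | succ d ih =>
    have key : ∀ (n m M N x : ℕ), M ≤ m → N + m < n →
      M + N + (d+1) = n → x ≤ m → x + m ≤ n → 0 ≤ FF q n m M N x := by
      intro n m M N x h1 h2 h3 h4 h5
      rcases x with _ | x
      · rw [FF_zero hq]; norm_num
      obtain ⟨n, rfl⟩ : ∃ n', n = n' + 1 := ⟨n - 1, by omega⟩
      obtain ⟨A, B, hA, hB, hA0, h⟩ := FF_rec hq n m M N x h1 (by omega) h4 h5
      rw [h]
      apply add_nonneg
      · by_cases he : x + 1 + m = n + 1
        · rw [hA0 he, zero_mul]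
        · exact mul_nonneg hA (ih _ _ _ _ _ h1 (by omega) (by omega) h4 (by omega))
      · exact mul_nonneg hB (ih _ _ _ _ _ h1 (by omega) (by omega) (by omega) (by omega))
    intro n m M N x h1 h2 h3 h4 h5
    by_cases h : N + m < n
    · exact key _ _ _ _ _ h1 h h3 h4 h5
    · rw [FF_symm _ _ _ _ _ _ (by omega)]
      exact key _ _ _ _ _ (by omega) (by omega) (by omega) (by omega) (by omega)

lemma qint_pos {q : ℝ} (hq : 1 < q) (j : ℕ) : 0 < qint q (j+1) := by
  unfold qint
  apply Finset.sum_pos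
  · intro i _; positivity
  · simp

lemma qint_mul {q : ℝ} (j : ℕ) : qint q j * (q - 1) = q ^ j - 1 := geom_sum_mul q j

lemma qint_eq {q : ℝ} (hq : 1 < q) (j : ℕ) : qint q j = (q ^ j - 1) / (q - 1) := by
  rw [← qint_mul]; field_simp [(sub_pos.2 hq).ne']

lemma qfact_pos {q : ℝ} (hq : 1 < q) (j : ℕ) : 0 < qfact q j :=
  Finset.prod_pos fun i _ => qint_pos hq i

lemma qfact_succ (q : ℝ) (j : ℕ) : qfact q (j+1) = qfact q j * qint q (j+1) := by
  simp [qfact, Finset.prod_range_succ]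

lemma qbinom_pos {q : ℝ} (hq : 1 < q) {a b : ℕ} (h : b ≤ a) : 0 < qbinom q a b := by
  rw [qbinom, if_pos h]
  exact div_pos (qfact_pos hq _) (mul_pos (qfact_pos hq _) (qfact_pos hq _))

lemma tele {q : ℝ} (hq : 1 < q) (n r : ℕ) : ∀ m : ℕ, 2 * m ≤ n →
    ∑ x ∈ Finset.range (m+1), qbinom q n x * q ^ x * (qint q (n - 2*x+1) / qint q (n-x+1)) *
      (qpoch (q ^ (-(x:ℤ))) q r * qpoch (q ^ ((x:ℤ) - n - 1)) q r) =
    qbinom q n m * (qpoch (q ^ (-(m:ℤ))) q r * qpoch (q ^ ((m:ℤ) - n)) q r) := by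
  have hq0 : q ≠ 0 := by positivity
  intro m
  induction m with
  | zero =>
    intro _
    have h := (qint_pos hq n).ne'
    rcases r with _ | r
    · simp [qpoch_zero', h]
    · have := qpoch_neg_eq_zero hq (by omega : 0 < r+1)
      rw [Finset.sum_range_one, this]; simp
  | succ m ih =>
    intro h
    rw [Finset.sum_range_succ, ih (by omega)]
    obtain ⟨s, rfl⟩ : ∃ s, n = 2 * m + 2 + s := ⟨n - (2*m+2), by omega⟩
    have b1 : qbinom q (2*m+2+s) m = qbinom q (2*m+2+s) (m+1) * qint q (m+1) / qint q (m+2+s) := by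
      rw [qbinom, if_pos (by omega), qbinom, if_pos (by omega),
        show 2*m+2+s - m = (m+1+s)+1 by omega, show 2*m+2+s-(m+1) = m+1+s by omega,
        qfact_succ, qfact_succ, show m+1+s+1 = m+2+s by omega]
      have := (qfact_pos hq m).ne'
      have := (qfact_pos hq (m+1+s)).ne'
      have := (qint_pos hq m).ne'
      have := (qint_pos hq (m+1+s)).ne'
      rw [show m+1+s+1 = m+2+s by omega] at this
      field_simp
    rw [b1, show 2*m+2+s - 2*(m+1)+1 = s+1 by omega, show 2*m+2+s-(m+1)+1 = m+2+s by omega]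
    obtain ⟨X, hX⟩ : ∃ X, X = q ^ (-((m+1:ℕ):ℤ)) := ⟨_, rfl⟩
    obtain ⟨Y, hY⟩ : ∃ Y, Y = q ^ (((m+1:ℕ):ℤ) - ((2*m+2+s:ℕ):ℤ) - 1) := ⟨_, rfl⟩
    have e1 : q ^ (-(m:ℤ)) = X * q := by
      rw [hX, ← zpow_add_one₀ hq0]; congr 1; push_cast; ring
    have e2 : q ^ ((m:ℤ) - ((2*m+2+s:ℕ):ℤ)) = Y := by
      rw [hY]; congr 1; push_cast; ring
    have e3 : q ^ (((m+1:ℕ):ℤ) - ((2*m+2+s:ℕ):ℤ)) = Y * q := by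
      rw [hY, ← zpow_add_one₀ hq0]; congr 1; ring
    rw [e1, e2, e3, ← hX, ← hY]
    have X1 : 1 - X ≠ 0 := by rw [hX]; exact (one_sub_zpow_pos hq (by omega)).ne'
    have Y1 : 1 - Y ≠ 0 := by rw [hY]; exact (one_sub_zpow_pos hq (by omega)).ne'
    have sX : qpoch (X*q) q r = qpoch X q r * (1 - X * q ^ r) / (1-X) := by
      rw [← qpoch_shift]; field_simp
    have sY : qpoch (Y*q) q r = qpoch Y q r * (1 - Y * q ^ r) / (1-Y) := by
      rw [← qpoch_shift]; field_simp
    have hX' : X * q ^ (m+1) = 1 := by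
      rw [hX, zpow_neg, zpow_natCast, inv_mul_cancel₀ (by positivity)]
    have hY' : Y * q ^ (m+2+s) = 1 := by
      rw [hY, ← zpow_natCast, ← zpow_add₀ hq0]
      convert zpow_zero q using 2; push_cast; ring
    have hu := (qint_pos hq (m+1+s)).ne'
    rw [show m+1+s+1 = m+2+s by omega] at hu
    have i1 := qint_mul (q := q) (m+1)
    have i2 := qint_mul (q := q) (m+2+s)
    have i3 := qint_mul (q := q) (s+1)
    have hq1 : q - 1 ≠ 0 := (sub_pos.2 hq).ne'
    have key : qint q (m+1) / qint q (m+2+s) * ((1 - X * q ^ r) / (1-X)) +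
        q ^ (m+1) * (qint q (s+1) / qint q (m+2+s)) = (1 - Y * q ^ r) / (1-Y) := by
      have k1 : (1 - X * q ^ r) / (1-X) = (q^(m+1) - q ^ r) / (q^(m+1) - 1) := by
        have : q ^ (m+1) - 1 ≠ 0 := (sub_pos.2 (one_lt_pow₀ hq (by omega))).ne'
        rw [div_eq_div_iff X1 this]
        linear_combination (1 - q^r) * hX'
      have k2 : (1 - Y * q ^ r) / (1-Y) = (q^(m+2+s) - q ^ r) / (q^(m+2+s) - 1) := by
        have : q ^ (m+2+s) - 1 ≠ 0 := (sub_pos.2 (one_lt_pow₀ hq (by omega))).ne'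
        rw [div_eq_div_iff Y1 this]
        linear_combination (1 - q^r) * hY'
      have z1 : q ^ (m+1) - 1 ≠ 0 := (sub_pos.2 (one_lt_pow₀ hq (by omega))).ne'
      have z2 : q ^ (m+2+s) - 1 ≠ 0 := (sub_pos.2 (one_lt_pow₀ hq (by omega))).ne'
      rw [k1, k2, qint_eq hq, qint_eq hq, qint_eq hq]
      have : q ^ (m+2+s) = q^(m+1) * q^(s+1) := by rw [← pow_add]; congr 1; omega
      rw [this] at z2 ⊢
      generalize q ^ (m+1) = u at *
      generalize q ^ (s+1) = v at *
      generalize q ^ r = t at *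
      field_simp
      ring
    rw [sX, sY]
    linear_combination (qbinom q (2*m+2+s) (m+1) * qpoch X q r * qpoch Y q r) * key

lemma poch_ratio {q : ℝ} (hq : 1 < q) (a d : ℕ) : ∀ b ≤ a,
    qpoch (q ^ (-(a:ℤ) - d)) q b * (q ^ d) ^ b * (qfact q a * qfact q (a + d - b)) =
    qpoch (q ^ (-(a:ℤ))) q b * (qfact q (a+d) * qfact q (a-b)) := by
  have hq0 : q ≠ 0 := by positivity
  intro b
  induction b with
  | zero => intro _; simp [qpoch]; ring
  | succ b ih =>
    intro hb
    have h := ih (by omega)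
    obtain ⟨s, rfl⟩ : ∃ s, a = b + 1 + s := ⟨a - (b+1), by omega⟩
    rw [show b+1+s+d-b = (s+d)+1 by omega, show b+1+s-b = s+1 by omega, qfact_succ q s,
      qfact_succ q (s+d)] at h
    rw [show b+1+s+d-(b+1) = s+d by omega, show b+1+s-(b+1) = s by omega, qpoch_succ, qpoch_succ]
    have f1 : (1 - q ^ (-((b+1+s:ℕ):ℤ) - d) * q ^ b) * q ^ d * q ^ (s+1) = q^(s+d+1) - 1 := by
      have : q ^ (-((b+1+s:ℕ):ℤ) - d) * q ^ b * q ^ d * q ^ (s+1) = 1 := by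
        simp only [← zpow_natCast]
        rw [← zpow_add₀ hq0, ← zpow_add₀ hq0, ← zpow_add₀ hq0]
        convert zpow_zero q using 2; push_cast; ring
      linear_combination - this
    have f2 : (1 - q ^ (-((b+1+s:ℕ):ℤ)) * q ^ b) * q ^ (s+1) = q^(s+1) - 1 := by
      have : q ^ (-((b+1+s:ℕ):ℤ)) * q ^ b * q ^ (s+1) = 1 := by
        simp only [← zpow_natCast]
        rw [← zpow_add₀ hq0, ← zpow_add₀ hq0]
        convert zpow_zero q using 2; push_cast; ring
      linear_combination - this
    rw [← qint_mul] at f1 f2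
    have hs : q ^ (s+1) ≠ 0 := pow_ne_zero _ hq0
    apply mul_right_cancel₀ hs
    rw [pow_succ (q^d)]
    generalize qpoch (q ^ (-((b+1+s:ℕ):ℤ) - d)) q b = P1 at *
    generalize qpoch (q ^ (-((b+1+s:ℕ):ℤ))) q b = P2 at *
    linear_combination (q-1) * h + P1 * (q^d)^b * (qfact q (b+1+s) * qfact q (s+d)) * f1 -
      P2 * (qfact q (b+1+s+d) * qfact q s) * f2

lemma CV_binom {q : ℝ} (hq : 1 < q) (M N : ℕ) :
    qbinom q (M+N) M * ∑ r ∈ Finset.range (min M N + 1), qpoch (q ^ (-(M:ℤ))) q r *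
      qpoch (q ^ (-(N:ℤ))) q r * q ^ r / (qpoch q q r * qpoch (q ^ (-(M:ℤ)-N)) q r) = 1 := by
  have hq0 : q ≠ 0 := by positivity
  have h := qCV hq M (q ^ (-(N:ℤ))) (q ^ (-(M:ℤ) - N)) (zpow_ne_zero _ hq0) (by
    intro i hi
    rw [← zpow_natCast q i, ← zpow_add₀ hq0]
    exact (one_sub_zpow_pos hq (by omega)).ne')
  have e : ∑ r ∈ Finset.range (min M N + 1), qpoch (q ^ (-(M:ℤ))) q r *
      qpoch (q ^ (-(N:ℤ))) q r * q ^ r / (qpoch q q r * qpoch (q ^ (-(M:ℤ)-N)) q r) =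
      ∑ r ∈ Finset.range (M + 1), qpoch (q ^ (-(M:ℤ))) q r *
      qpoch (q ^ (-(N:ℤ))) q r * q ^ r / (qpoch q q r * qpoch (q ^ (-(M:ℤ)-N)) q r) := by
    apply Finset.sum_subset
    · intro r hr; simp only [Finset.mem_range] at *; omega
    · intro r hr hr'
      simp only [Finset.mem_range] at *
      rw [qpoch_neg_eq_zero hq (by omega : N < r)]; simp
  rw [e, h, ← zpow_sub₀ hq0, show -(M:ℤ) - N - -(N:ℤ) = -(M:ℤ) by ring]
  have hr := poch_ratio hq M N M le_rfl
  rw [Nat.sub_self, Nat.add_sub_cancel_left] at hr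
  have a1 : qpoch (q ^ (-(M:ℤ) - N)) q M ≠ 0 := (qpoch_neg_pos hq (by omega)).ne'
  have a2 := (qfact_pos hq M).ne'
  have a3 := (qfact_pos hq N).ne'
  rw [qbinom, if_pos (by omega), Nat.add_sub_cancel_left, zpow_neg q (N:ℤ), zpow_natCast]
  have a4 : q ^ N ≠ 0 := pow_ne_zero _ hq0
  have z : qfact q 0 = 1 := by simp [qfact]
  rw [z, mul_one] at hr
  rw [inv_pow]
  field_simp
  linear_combination -hr

/-- **Main Theorem, case (1): `q` a prime power.**
If `q ≥ 2` is an integer power of a prime, then for parameters `(n,m,k,l)` as in the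
context and every `x ∈ {0,…,m}` one has `p(x;q) ≥ 0`; together with
`Σ_{x=0}^{m} p(x;q) = 1`, the function `x ↦ p(x;q)` is the probability mass function
of the `q`-Racah probability distribution on `{0,1,…,m}`. -/
theorem qRacah_distribution_prime_power (q : ℕ) (hq2 : 2 ≤ q) (hq : IsPrimePow q)
    (n m k l x : ℕ) (hm : m ≤ n / 2) (hk : k ≤ n)
    (hl : m + k ≤ n + l) (hlm : l ≤ m) (hlk : l ≤ k) (hx : x ≤ m) :
    0 ≤ pq (q : ℝ) n m k l x ∧
      ∑ y ∈ Finset.range (m + 1), pq (q : ℝ) n m k l y = 1 := by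
  have hq1 : (1:ℝ) < q := by exact_mod_cast (by omega : 1 < q)
  generalize (q:ℝ) = q at *
  have h2m : 2 * m ≤ n := by omega
  obtain ⟨M, hM⟩ : ∃ M, M = m - l := ⟨_, rfl⟩
  obtain ⟨N, hN⟩ : ∃ N, N = n + l - m - k := ⟨_, rfl⟩
  have hp : ∀ x, pq q n m k l x = qbinom q (M+N) M * (qbinom q n x / qbinom q n m) * q ^ x *
      (qint q (n - 2 * x + 1) / qint q (n - x + 1)) * FF q n m M N x := by
    intro x
    rw [pq, ← hM, ← hN, sum_min hq1, show n - k = M + N by omega]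
  constructor
  · rw [hp]
    have h1 := qbinom_pos hq1 (by omega : M ≤ M + N)
    have h2 := qbinom_pos hq1 (by omega : x ≤ n)
    have h3 := qbinom_pos hq1 (by omega : m ≤ n)
    have h4 := qint_pos hq1 (n - 2*x)
    have h5 := qint_pos hq1 (n - x)
    have h6 := FF_nonneg hq1 (n - M - N) n m M N x (by omega) (by omega) (by omega) hx (by omega)
    positivity
  · have hb := (qbinom_pos hq1 (by omega : m ≤ n)).ne'
    rw [← CV_binom hq1 M N, Finset.mul_sum]
    simp only [hp, FF, Finset.mul_sum]
    rw [Finset.sum_comm]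
    apply Finset.sum_congr rfl
    intro r hr
    have hr := Finset.mem_range.1 hr
    have ht := tele hq1 n r m h2m
    have a1 : qpoch (q ^ (-(m:ℤ))) q r ≠ 0 := (qpoch_neg_pos hq1 (by omega)).ne'
    have a2 : qpoch (q ^ ((m:ℤ) - n)) q r ≠ 0 := (qpoch_neg_pos hq1 (by omega)).ne'
    have a3 : qpoch (q ^ (-(M:ℤ)-N)) q r ≠ 0 := (qpoch_neg_pos hq1 (by omega)).ne'
    have a4 := qpoch_q_ne hq1 r
    trans qbinom q (M+N) M / qbinom q n m * (qpoch (q ^ (-(M:ℤ))) q r *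
      qpoch (q ^ (-(N:ℤ))) q r * q ^ r / (qpoch q q r * qpoch (q ^ (-(m:ℤ))) q r *
      qpoch (q ^ ((m:ℤ) - n)) q r * qpoch (q ^ (-(M:ℤ)-N)) q r)) *
      ∑ x ∈ Finset.range (m+1), qbinom q n x * q ^ x * (qint q (n - 2*x+1) / qint q (n-x+1)) *
      (qpoch (q ^ (-(x:ℤ))) q r * qpoch (q ^ ((x:ℤ) - n - 1)) q r)
    · rw [Finset.mul_sum]
      apply Finset.sum_congr rfl
      intro y _
      unfold hypTerm
      ring
    · rw [ht]
      field_simp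
end

section
/- (Racah probability distribution; Theorem 4.3) For every parameter tuple (n,m,k,l) as in the context and every x ∈ {0,1,…,m}, one has p(x) ≥ 0; consequently, since Σ_{x=0}^{m} p(x) = 1, the function x ↦ p(x) is the probability mass function of a probability distribution (the Racah probability distribution P_{n,m,k,l}) on the finite set {0,1,…,m}. -/
open Finset

/-- The raising factorial `(a)_r = a(a+1)⋯(a+r-1)`, as a rational number. -/
def raise (a : ℤ) (r : ℕ) : ℚ := ∏ i ∈ Finset.range r, ((a : ℚ) + i)

/-- The `r`-th term of the terminating balanced `₄F₃`-series with numerator parameters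
`a, b, -M, -N` and denominator parameters `-m, m-n, -M-N`, evaluated at `1`. -/
def hgTerm (n m M N : ℕ) (a b : ℤ) (r : ℕ) : ℚ :=
  (raise a r * raise b r * raise (-(M : ℤ)) r * raise (-(N : ℤ)) r) /
    ((Nat.factorial r : ℚ) * raise (-(m : ℤ)) r * raise ((m : ℤ) - n) r *
      raise (-(M : ℤ) - N) r)

/-- The `q → 1` limit function `p(x) = p(x | n,m,k,l)` of (4.1), with `M = m - l` and
`N = n - m - k + l`: a Racah polynomial value times a positive factor. -/
def pone (n m k l x : ℕ) : ℚ :=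
  (Nat.choose (n - k) (m - l) : ℚ) * ((Nat.choose n x : ℚ) / (Nat.choose n m : ℚ)) *
    (((n : ℚ) - 2 * x + 1) / ((n : ℚ) - x + 1)) *
    ∑ r ∈ Finset.range (min x (min (m - l) (n + l - m - k)) + 1),
      hgTerm n m (m - l) (n + l - m - k) (-(x : ℤ)) ((x : ℤ) - n - 1) r

/-- reciprocal-factorial kernel, zero for `r > x` -/
def rhK (n x r : ℕ) : ℚ :=
  if r ≤ x then 1 / (((x - r).factorial : ℚ) * ((n + 1 - x - r).factorial : ℚ)) else 0

def rhT (M N r : ℕ) : ℚ :=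
  ((M + N - r).factorial : ℚ) /
    (((M - r).factorial : ℚ) * ((N - r).factorial : ℚ) * (r.factorial : ℚ))

def rhQ (M N s t x : ℕ) : ℚ :=
  ∑ r ∈ Finset.range (min M N + 1), (-1 : ℚ) ^ r * rhT M N r *
    (((M + s - r).factorial : ℚ) * ((N + t - r).factorial : ℚ)) * rhK (M + s + N + t) x r

lemma rhQ_swap (M N s t x : ℕ) : rhQ M N s t x = rhQ N M t s x := by
  unfold rhQ rhT
  rw [min_comm M N]
  refine Finset.sum_congr rfl fun r _ => ?_
  rw [show N + t + M + s = M + s + N + t by ring, add_comm M N]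
  ring

lemma rhK_rec (n m x r : ℕ) (hx : x + 1 ≤ m + 1) (hx2 : 2 * (x + 1) ≤ n + 1) (hr : r ≤ m) :
    ((n : ℚ) - 2 * x) * ((m + 1 - r : ℕ) : ℚ) * rhK (n + 1) (x + 1) r
      = ((m : ℚ) - x) * rhK n (x + 1) r + ((n : ℚ) - x - m) * rhK n x r := by
  unfold rhK
  rcases lt_trichotomy r (x + 1) with h | h | h
  · have h1 : r ≤ x := by omega
    obtain ⟨a, rfl⟩ := Nat.exists_eq_add_of_le h1
    obtain ⟨b, hb⟩ := Nat.exists_eq_add_of_le (show r + (r + a) ≤ n by omega)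
    rw [if_pos (by omega), if_pos (by omega), if_pos (by omega)]
    subst hb
    rw [show r + a + 1 - r = a + 1 by omega, show r + a - r = a by omega,
      show r + (r + a) + b + 1 + 1 - (r + a + 1) - r = b + 1 by omega,
      show r + (r + a) + b + 1 - (r + a + 1) - r = b by omega,
      show r + (r + a) + b + 1 - (r + a) - r = b + 1 by omega,
      Nat.factorial_succ, Nat.factorial_succ, Nat.cast_sub (by omega)]
    have := Nat.factorial_pos a
    have := Nat.factorial_pos b
    push_cast
    field_simp
    ring
  · subst h
    rw [if_pos le_rfl, if_pos le_rfl, if_neg (by omega)]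
    obtain ⟨b, hb⟩ := Nat.exists_eq_add_of_le (show 2 * (x + 1) ≤ n + 1 by omega)
    rw [show n + 1 + 1 - (x + 1) - (x + 1) = b + 1 by omega,
      show n + 1 - (x + 1) - (x + 1) = b by omega, Nat.cast_sub (by omega),
      Nat.factorial_succ]
    have hn : (n : ℚ) = 2 * (x + 1) + b - 1 := by
      have : ((n + 1 : ℕ) : ℚ) = ((2 * (x + 1) + b : ℕ) : ℚ) := by rw [hb]
      push_cast at this; linarith
    have := Nat.factorial_pos b
    rw [hn]
    push_cast
    simp only [Nat.sub_self, Nat.factorial_zero]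
    field_simp
    ring
  · rw [if_neg (by omega), if_neg (by omega), if_neg (by omega)]; ring

lemma rhQ_rec (M N s t x : ℕ) (hx : x + 1 ≤ M + s + 1) (hx2 : x + 1 ≤ N + t) :
    (((M + s + N + t : ℕ) : ℚ) - 2 * x) * rhQ M N (s + 1) t (x + 1)
      = (((M + s : ℕ) : ℚ) - x) * rhQ M N s t (x + 1)
        + (((N + t : ℕ) : ℚ) - x) * rhQ M N s t x := by
  unfold rhQ
  rw [Finset.mul_sum, Finset.mul_sum, Finset.mul_sum, ← Finset.sum_add_distrib]
  refine Finset.sum_congr rfl fun r hr => ?_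
  have hr' : r ≤ M + s := by
    have := Finset.mem_range.mp hr
    have := min_le_left M N
    omega
  have key := rhK_rec (M + s + N + t) (M + s) x r hx (by omega) hr'
  rw [show M + (s + 1) + N + t = M + s + N + t + 1 by ring,
    show M + (s + 1) - r = (M + s - r) + 1 by omega, Nat.factorial_succ]
  rw [show M + s + 1 - r = (M + s - r) + 1 by omega] at key
  push_cast at key ⊢
  linear_combination ((-1 : ℚ) ^ r * rhT M N r *
    (((M + s - r).factorial : ℚ) * ((N + t - r).factorial : ℚ))) * key

lemma rhQ_rec0 (M N s t : ℕ) :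
    (((M + s + N + t : ℕ) : ℚ) + 2) * rhQ M N (s + 1) t 0
      = (((M + s : ℕ) : ℚ) + 1) * rhQ M N s t 0 := by
  have h : ∀ a b, rhQ M N a b 0 = rhT M N 0 *
    (((M + a).factorial : ℚ) * ((N + b).factorial : ℚ)) / ((M + a + N + b + 1).factorial : ℚ) := by
    intro a b
    unfold rhQ
    rw [Finset.sum_eq_single 0]
    · simp [rhK]; ring
    · intro r _ hr
      rw [rhK, if_neg (by omega), mul_zero]
    · simp
  rw [h, h, show M + (s + 1) + N + t + 1 = (M + s + N + t + 1) + 1 by ring,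
    show M + (s + 1) = M + s + 1 by ring, Nat.factorial_succ (M + s),
    Nat.factorial_succ (M + s + N + t + 1)]
  have := Nat.factorial_pos (M + s + N + t + 1)
  push_cast
  have : (M : ℚ) + s + N + t + 1 + 1 ≠ 0 := by positivity
  field_simp
  ring

lemma rhQ_base0 (M N : ℕ) : ((M + N : ℕ) + 1 : ℚ) * rhQ M N 0 0 0 = 1 := by
  unfold rhQ
  rw [Finset.sum_eq_single 0]
  · simp only [rhK, rhT, Nat.sub_zero, add_zero, Nat.factorial_succ, le_refl, if_true]
    have := Nat.factorial_pos (M + N)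
    have := Nat.factorial_pos M
    have := Nat.factorial_pos N
    push_cast
    have : (M : ℚ) + N + 1 ≠ 0 := by positivity
    simp only [Nat.factorial_zero]
    field_simp
    simp
  · intro r _ hr
    rw [rhK, if_neg (by omega), mul_zero]
  · simp

lemma raise_neg (a r : ℕ) (h : r ≤ a) :
    raise (-(a : ℤ)) r = (-1) ^ r * ((a.factorial : ℚ) / ((a - r).factorial : ℚ)) := by
  induction r with
  | zero =>
    have := Nat.factorial_pos a
    simp [raise]; field_simp
  | succ r ih =>
    have e : raise (-(a : ℤ)) (r + 1) = raise (-(a : ℤ)) r * (-(a : ℚ) + r) := by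
      simp [raise, Finset.prod_range_succ]
    rw [e, ih (by omega)]
    obtain ⟨b, rfl⟩ := Nat.exists_eq_add_of_le h
    rw [show r + 1 + b - r = b + 1 by omega, show r + 1 + b - (r + 1) = b by omega,
      Nat.factorial_succ b]
    have := Nat.factorial_pos b
    push_cast
    field_simp
    ring

lemma rhQ_base (M N x : ℕ) (h1 : x + 1 ≤ M) (h2 : x + 1 ≤ N) : rhQ M N 0 0 (x + 1) = 0 := by
  have e1 : rhQ M N 0 0 (x + 1) = ∑ r ∈ Finset.range (x + 1 + 1), (-1 : ℚ) ^ r * rhT M N r *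
    (((M + 0 - r).factorial : ℚ) * ((N + 0 - r).factorial : ℚ)) * rhK (M + 0 + N + 0) (x + 1) r := by
    unfold rhQ
    symm
    apply Finset.sum_subset
    · intro r hr; simp at hr ⊢; omega
    · intro r _ hr
      rw [rhK, if_neg (by simp at hr; omega), mul_zero]
  have e2 : ∀ r ∈ Finset.range (x + 1 + 1), (-1 : ℚ) ^ r * rhT M N r *
    (((M + 0 - r).factorial : ℚ) * ((N + 0 - r).factorial : ℚ)) * rhK (M + 0 + N + 0) (x + 1) r
     = (-1) ^ (x + 1) / ((x + 1).factorial : ℚ) * (((-1 : ℤ) ^ (x + 1 - r) * ((x + 1).choose r)) • 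
        (((descPochhammer ℚ x).comp (Polynomial.C ((M + N : ℕ) : ℚ) - Polynomial.X)).eval ((0 : ℚ) + r • (1 : ℚ)))) := by
    intro r hr
    have hr : r ≤ x + 1 := by simp at hr; omega
    have e3 : (M + N : ℕ) - (r : ℚ) = ((M + N - r : ℕ) : ℚ) := by
      rw [Nat.cast_sub (by omega)]
    simp only [Polynomial.eval_comp, Polynomial.eval_sub, Polynomial.eval_C, Polynomial.eval_X,
      zero_add, nsmul_eq_mul, mul_one, zsmul_eq_mul]
    rw [e3, descPochhammer_eval_eq_descFactorial]
    have e4 := Nat.factorial_mul_descFactorial (show x ≤ M + N - r by omega)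
    have e5 := Nat.choose_mul_factorial_mul_factorial hr
    obtain ⟨a, ha⟩ := Nat.exists_eq_add_of_le hr
    rw [rhK, if_pos hr, rhT, ← e4, show M + N - r - x = M + 0 + N + 0 + 1 - (x + 1) - r by omega,
      ← e5]
    have := Nat.choose_pos hr
    have := Nat.factorial_pos (M - r)
    have := Nat.factorial_pos (N - r)
    have := Nat.factorial_pos r
    have := Nat.factorial_pos (x + 1 - r)
    have := Nat.factorial_pos (M + 0 + N + 0 + 1 - (x + 1) - r)
    have e6 : (-1 : ℚ) ^ (x + 1) * (-1) ^ (x + 1 - r) = (-1) ^ r := by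
      rw [ha, show r + a - r = a by omega, pow_add, mul_assoc, ← mul_pow]; simp
    rw [← e6]
    simp only [add_zero]
    push_cast
    field_simp
  rw [e1, Finset.sum_congr rfl e2, ← Finset.mul_sum,
    ← fwdDiff_iter_eq_sum_shift (1 : ℚ) (fun y => Polynomial.eval y _) (x + 1) 0]
  have hd : ((descPochhammer ℚ x).comp
      (Polynomial.C ((M + N : ℕ) : ℚ) - Polynomial.X)).natDegree < x + 1 := by
    refine lt_of_le_of_lt Polynomial.natDegree_comp_le ?_
    rw [descPochhammer_natDegree]
    have : (Polynomial.C ((M + N : ℕ) : ℚ) - Polynomial.X).natDegree ≤ 1 :=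
      (Polynomial.natDegree_sub_le _ _).trans
        (by rw [Polynomial.natDegree_C, Polynomial.natDegree_X]; simp)
    nlinarith
  have hf := fwdDiff_iter_sum_mul_pow_eq_zero (R := ℚ) (n := x + 1)
    (fun i => ((descPochhammer ℚ x).comp
      (Polynomial.C ((M + N : ℕ) : ℚ) - Polynomial.X)).coeff i)
  simp_rw [← Polynomial.eval_eq_sum_range' hd] at hf
  rw [hf]
  simp

lemma rhQ_nonneg (u : ℕ) : ∀ M N s t x : ℕ, s + t = u → x ≤ M + s → x ≤ N + t →
    0 ≤ rhQ M N s t x := by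
  induction u with
  | zero =>
    intro M N s t x hu h1 h2
    obtain ⟨rfl, rfl⟩ : s = 0 ∧ t = 0 := by omega
    cases x with
    | zero =>
      have := rhQ_base0 M N
      have hp : (0 : ℚ) < (M + N : ℕ) + 1 := by positivity
      by_contra hc
      push Not at hc
      nlinarith
    | succ x => exact (rhQ_base M N x (by omega) (by omega)).ge
  | succ u ih =>
    have main : ∀ M N s t x : ℕ, s + t = u → x ≤ M + s + 1 → x ≤ N + t →
        0 ≤ rhQ M N (s + 1) t x := by
      intro M N s t x hu h1 h2
      cases x with
      | zero =>
        have h := rhQ_rec0 M N s t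
        have := ih M N s t 0 hu (by omega) (by omega)
        refine nonneg_of_mul_nonneg_right (h ▸ by positivity) (by positivity : (0 : ℚ) < ((M + s + N + t : ℕ) : ℚ) + 2)
      | succ x =>
        have h := rhQ_rec M N s t x h1 h2
        have c1 : ((x : ℚ) + 1) ≤ (M + s : ℕ) + 1 := by exact_mod_cast h1
        have c2 : ((x : ℚ) + 1) ≤ (N + t : ℕ) := by exact_mod_cast h2
        have hpos : (0 : ℚ) < ((M + s + N + t : ℕ) : ℚ) - 2 * x := by
          push_cast at c1 c2 ⊢; linarith
        refine nonneg_of_mul_nonneg_right ?_ hpos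
        rw [h]
        have p2 : 0 ≤ (((N + t : ℕ) : ℚ) - x) * rhQ M N s t x :=
          mul_nonneg (by linarith) (ih M N s t x hu (by omega) (by omega))
        have p1 : 0 ≤ (((M + s : ℕ) : ℚ) - x) * rhQ M N s t (x + 1) := by
          rcases Nat.lt_or_ge x (M + s) with hlt | hge
          · exact mul_nonneg (by linarith) (ih M N s t (x + 1) hu (by omega) (by omega))
          · rw [show x = M + s by omega]; simp
        linarith
    intro M N s t x hu h1 h2
    rcases s with _ | s
    · rcases t with _ | t
      · omega
      · rw [rhQ_swap]; exact main N M t 0 x (by omega) (by omega) (by omega)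
    · exact main M N s t x (by omega) (by omega) (by omega)

def rhS (M N s t : ℕ) : ℚ :=
  ∑ x ∈ Finset.range (min (M + s) (N + t) + 1),
    (((M + s + N + t : ℕ) : ℚ) + 1 - 2 * x) * rhQ M N s t x

lemma rhS_step (M N s t : ℕ) : rhS M N (s + 1) t = rhS M N s t := by
  have h1 : ∀ μ, μ ≤ M + s + 1 → μ ≤ N + t → 
     ∑ x ∈ Finset.range (μ + 1), (((M + (s + 1) + N + t : ℕ) : ℚ) + 1 - 2 * x) * rhQ M N (s + 1) t x
     = ∑ x ∈ Finset.range μ, (((M + s + N + t : ℕ) : ℚ) + 1 - 2 * x) * rhQ M N s t x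
       + (((M + s : ℕ) : ℚ) + 1 - μ) * rhQ M N s t μ := by
    intro μ
    induction μ with
    | zero =>
      intro _ _
      have h := rhQ_rec0 M N s t
      simp only [zero_add, Finset.sum_range_one, Finset.sum_range_zero]
      push_cast at h ⊢
      linear_combination h
    | succ x ih =>
      intro a b
      have h := rhQ_rec M N s t x a b
      rw [Finset.sum_range_succ, ih (by omega) (by omega), Finset.sum_range_succ]
      push_cast at h ⊢
      linear_combination h
  unfold rhS
  rw [h1 _ (by omega) (by omega)]
  rcases Nat.lt_or_ge (M + s) (N + t) with h | h
  · rw [show min (M + (s + 1)) (N + t) = M + s + 1 by omega, show min (M + s) (N + t) = M + s by omega]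
    push_cast; ring
  · rw [show min (M + (s + 1)) (N + t) = N + t by omega, show min (M + s) (N + t) = N + t by omega,
      Finset.sum_range_succ]
    push_cast; ring

lemma rhS_swap (M N s t : ℕ) : rhS M N s t = rhS N M t s := by
  unfold rhS
  rw [min_comm]
  refine Finset.sum_congr rfl fun r _ => ?_
  rw [rhQ_swap, show N + t + M + s = M + s + N + t by ring]

lemma rhS_one (M N s t : ℕ) : rhS M N s t = 1 := by
  induction s with
  | succ s ih => rw [rhS_step, ih]
  | zero =>
    induction t with
    | succ t ih => rw [rhS_swap, rhS_step, rhS_swap, ih]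
    | zero =>
      unfold rhS
      rw [Finset.sum_eq_single 0]
      · have := rhQ_base0 M N
        simpa using this
      · intro x hx h0
        obtain ⟨y, rfl⟩ := Nat.exists_eq_succ_of_ne_zero h0
        simp at hx
        rw [rhQ_base M N y (by omega) (by omega), mul_zero]
      · simp

lemma pone_eq (M N s t x : ℕ) (hx : x ≤ M + s) (hx2 : x ≤ N + t) :
    pone (M + s + N + t) (M + s) (s + t) s x
      = (((M + s + N + t : ℕ) : ℚ) + 1 - 2 * x) * rhQ M N s t x := by
  have e1 : rhQ M N s t x = ∑ r ∈ Finset.range (min x (min M N) + 1), (-1 : ℚ) ^ r * rhT M N r *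
    (((M + s - r).factorial : ℚ) * ((N + t - r).factorial : ℚ)) * rhK (M + s + N + t) x r := by
    unfold rhQ
    symm
    apply Finset.sum_subset
    · intro r hr; simp at hr ⊢; omega
    · intro r hr1 hr
      rw [rhK, if_neg (by simp at hr hr1; omega), mul_zero]
  rw [e1, pone, show M + s - s = M by omega, show M + s + N + t + s - (M + s) - (s + t) = N by omega,
    show M + s + N + t - (s + t) = M + N by omega, Finset.mul_sum, Finset.mul_sum]
  refine Finset.sum_congr rfl fun r hr => ?_
  have hr : r ≤ x ∧ r ≤ M ∧ r ≤ N := by simp at hr; omega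
  obtain ⟨ha, hb, hc⟩ := hr
  rw [hgTerm, rhK, if_pos ha, rhT,
    show (x : ℤ) - (M + s + N + t : ℕ) - 1 = -((M + s + N + t + 1 - x : ℕ) : ℤ) by omega,
    show ((M + s : ℕ) : ℤ) - (M + s + N + t : ℕ) = -((N + t : ℕ) : ℤ) by omega,
    show -(M : ℤ) - N = -((M + N : ℕ) : ℤ) by omega,
    raise_neg _ _ ha, raise_neg _ _ hb, raise_neg _ _ hc, raise_neg _ _ (by omega),
    raise_neg _ _ (by omega), raise_neg _ _ (by omega), raise_neg _ _ (by omega)]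
  rw [Nat.cast_choose ℚ (show M ≤ M + N by omega),
    Nat.cast_choose ℚ (show x ≤ M + s + N + t by omega),
    Nat.cast_choose ℚ (show M + s ≤ M + s + N + t by omega)]
  rw [show M + N - M = N by omega, show M + s + N + t - (M + s) = N + t by omega]
  have e2 : M + s + N + t + 1 - x = (M + s + N + t - x) + 1 := by omega
  have e3 : ((M + s + N + t : ℕ) : ℚ) - x + 1 = ((M + s + N + t - x + 1 : ℕ) : ℚ) := by
    rw [Nat.cast_add (M + s + N + t - x), Nat.cast_sub (by omega)]; simp
  rw [e2, e3, Nat.factorial_succ]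
  generalize M + s + N + t - x + 1 - r = q1
  generalize M + s + N + t - x = q2
  generalize x - r = q3
  have f : ∀ a : ℕ, (a.factorial : ℚ) ≠ 0 := fun a => by exact_mod_cast a.factorial_ne_zero
  have g := f (M + s + N + t)
  have hs : (-1 : ℚ) ^ r ≠ 0 := by positivity
  have hs2 : ((-1 : ℚ) ^ r) ^ 2 = 1 := by rw [← pow_mul, mul_comm, pow_mul]; simp
  have hq : ((q2 : ℚ) + 1) ≠ 0 := by positivity
  rw [Nat.cast_mul]
  generalize (-1 : ℚ) ^ r = ε at *
  have hsi : ε * ε = 1 := by linarith [hs2, sq ε]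
  have := f M
  have := f N
  have := f x
  have := f r
  have := f q1
  have := f q2
  have := f q3
  have := f (M + s)
  have := f (N + t)
  have := f (M + N)
  have := f (M - r)
  have := f (N - r)
  have := f (M + s - r)
  have := f (N + t - r)
  have := f (M + N - r)
  push_cast
  field_simp
  ring_nf
  try linear_combination hsi

/-- **Theorem 4.3 (Racah probability distribution).**
For every parameter tuple `(n,m,k,l)` as in the context and every `x ∈ {0,…,m}`,
`p(x) ≥ 0`; together with `Σ_{x=0}^{m} p(x) = 1`, the function `x ↦ p(x)` is the
probability mass function of the Racah probability distribution on `{0,1,…,m}`. -/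
theorem racah_distribution
    (n m k l x : ℕ) (hm : m ≤ n / 2) (hk : k ≤ n)
    (hl : m + k ≤ n + l) (hlm : l ≤ m) (hlk : l ≤ k) (hx : x ≤ m) :
    0 ≤ pone n m k l x ∧ ∑ y ∈ Finset.range (m + 1), pone n m k l y = 1 := by
  obtain ⟨M, rfl⟩ := Nat.exists_eq_add_of_le' hlm
  obtain ⟨t, rfl⟩ := Nat.exists_eq_add_of_le hlk
  obtain ⟨N, hN⟩ := Nat.exists_eq_add_of_le hl
  obtain rfl : n = M + l + N + t := by omega
  constructor
  · rw [pone_eq _ _ _ _ _ hx (by omega)]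
    refine mul_nonneg ?_ (rhQ_nonneg _ M N l t x rfl hx (by omega))
    have : ((2 * x : ℕ) : ℚ) ≤ (M + l + N + t : ℕ) := by
      exact_mod_cast (by omega : 2 * x ≤ M + l + N + t)
    push_cast at this ⊢
    linarith
  · have := rhS_one M N l t
    rw [rhS, show min (M + l) (N + t) = M + l by omega] at this
    rw [← this]
    refine Finset.sum_congr rfl fun y hy => ?_
    simp at hy
    exact pone_eq _ _ _ _ _ (by omega) (by omega)
end

section
/- (Support of the Racah distribution; Proposition 5.2) For every parameter tuple (n,m,k,l) as in the context and every x ∈ {0,1,…,m}, one has p(x) > 0 if and only if x ≤ min(k,m); equivalently (since x ≤ m always), p(x) > 0 if and only if x ≤ k, and p(x) = 0 for k < x ≤ m. -/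
open Finset

lemma raise_succ_r (a : ℤ) (r : ℕ) : raise a (r+1) = raise a r * ((a:ℚ) + r) := by
  simp [raise, Finset.prod_range_succ]

lemma raise_succ_l (a : ℤ) (r : ℕ) : raise a (r+1) = a * raise (a+1) r := by
  unfold raise
  rw [Finset.prod_range_succ', mul_comm]
  congr 1
  · simp
  · apply Finset.prod_congr rfl
    intro i _
    push_cast
    ring

lemma raise_shift (a : ℤ) (r : ℕ) : (a:ℚ) * raise (a+1) r = raise a r * ((a:ℚ) + r) := by
  rw [← raise_succ_l, raise_succ_r]

lemma raise_ne (j : ℤ) (r : ℕ) (h : (r:ℤ) ≤ j) : raise (-j) r ≠ 0 := by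
  unfold raise
  rw [Finset.prod_ne_zero_iff]
  intro i hi
  rw [Finset.mem_range] at hi
  have : -j + (i:ℤ) ≠ 0 := by omega
  exact_mod_cast this

lemma raise_zero_of (j r : ℕ) (h : j < r) : raise (-(j:ℤ)) r = 0 := by
  unfold raise
  apply Finset.prod_eq_zero (Finset.mem_range.2 h)
  simp

def TT (m m' M N x : ℕ) (r : ℕ) : ℚ :=
  (raise (-(x:ℤ)) r * raise ((x:ℤ) - (m + m') - 1) r * raise (-(M : ℤ)) r * raise (-(N : ℤ)) r) /
    ((Nat.factorial r : ℚ) * raise (-(m : ℤ)) r * raise (-(m':ℤ)) r *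
      raise (-(M : ℤ) - N) r)

def SS (m m' M N x : ℕ) : ℚ := ∑ r ∈ Finset.range (min M N + 1), TT m m' M N x r

lemma SS_symm (m m' M N x : ℕ) : SS m m' M N x = SS m' m N M x := by
  unfold SS
  rw [min_comm]
  apply Finset.sum_congr rfl
  intro r _
  unfold TT
  rw [add_comm (m:ℤ) m', show -(M:ℤ) - N = -(N:ℤ) - M by ring]
  congr 1 <;> ring

lemma SS_zero (m m' M N : ℕ) : SS m m' M N 0 = 1 := by
  unfold SS
  rw [Finset.sum_range_succ']
  rw [Finset.sum_eq_zero]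
  · simp [TT, raise]
  · intro r _
    have := raise_zero_of 0 (r+1) (by omega)
    simp only [TT, this]
    simp

lemma TT_rec (m m' M N y r : ℕ) (hM : M ≤ m) (hy : y + 1 ≤ m + 1) (hy' : y + 1 ≤ m')
    (hN : N ≤ m') (hr : r ≤ min M N) :
    TT (m+1) m' M N (y+1) r =
      (((m:ℚ)+m'+1-y)*((m:ℚ)-y)/(((m:ℚ)+1)*((m:ℚ)+m'-2*y))) * TT m m' M N (y+1) r
      + (((y:ℚ)+1)*((m':ℚ)-y)/(((m:ℚ)+1)*((m:ℚ)+m'-2*y))) * TT m m' M N y r := by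
  have h1 := raise_shift (-((m:ℤ)+1)) r
  have h2 := raise_shift (((y+1:ℕ):ℤ) - (((m+1:ℕ):ℤ) + m') - 1) r
  have h3 := raise_shift (-((y:ℤ)+1)) r
  rw [show -((m:ℤ)+1) + 1 = -(m:ℤ) by ring] at h1
  rw [show (((y+1:ℕ):ℤ) - (((m+1:ℕ):ℤ) + m') - 1) + 1 = ((y+1:ℕ):ℤ) - (m+m') - 1 by push_cast; ring] at h2
  rw [show -((y:ℤ)+1) + 1 = -(y:ℤ) by ring] at h3
  have n1 := raise_ne (m:ℤ) r (by omega)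
  have n2 := raise_ne ((m:ℤ)+1) r (by omega)
  have n3 := raise_ne (m':ℤ) r (by omega)
  have n4 := raise_ne ((M:ℤ)+N) r (by omega)
  have n5 : (Nat.factorial r : ℚ) ≠ 0 := by positivity
  unfold TT
  rw [show ((y:ℕ):ℤ) - ((m:ℤ) + m') - 1 = ((y+1:ℕ):ℤ) - (((m+1:ℕ):ℤ) + m') - 1 by push_cast; ring]
  rw [show -(M:ℤ) - N = -((M:ℤ)+N) by ring]
  rw [show -((m+1:ℕ):ℤ) = -((m:ℤ)+1) by push_cast; ring, show -((y+1:ℕ):ℤ) = -((y:ℤ)+1) by push_cast; ring]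
  generalize raise (((y+1:ℕ):ℤ) - (((m+1:ℕ):ℤ) + m') - 1) r = B at *
  generalize raise (((y+1:ℕ):ℤ) - ((m:ℤ) + m') - 1) r = B' at *
  generalize raise (-((y:ℤ)+1)) r = A at *
  generalize raise (-(y:ℤ)) r = A' at *
  generalize raise (-((m:ℤ)+1)) r = C at *
  generalize raise (-(m:ℤ)) r = C' at *
  generalize raise (-(m':ℤ)) r = D at *
  generalize raise (-((M:ℤ)+N)) r = E at *
  generalize raise (-(M:ℤ)) r = F at *
  generalize raise (-(N:ℤ)) r = G at *
  push_cast at h1 h2 h3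
  have e1 : (m:ℚ)+1 ≠ 0 := by positivity
  have e2 : (y:ℚ)+1 ≠ 0 := by positivity
  have g1 : (y:ℚ) ≤ m := by exact_mod_cast (by omega : y ≤ m)
  have g2 : (y:ℚ) + 1 ≤ m' := by exact_mod_cast hy'
  have e3 : (m:ℚ)+m'-2*y ≠ 0 := by linarith
  have e4 : (m:ℚ)+m'+1-y ≠ 0 := by
    have : (0:ℚ) ≤ m := by positivity
    linarith
  have g3 : (r:ℚ) ≤ m := by exact_mod_cast (by omega : r ≤ m)
  have e5 : (m:ℚ)+1-r ≠ 0 := by linarith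
  have hC : C' = C * ((m:ℚ)+1-r)/((m:ℚ)+1) := by
    field_simp; linarith
  have hB : B' = B * ((m:ℚ)+m'+1-y-r)/((m:ℚ)+m'+1-y) := by
    field_simp; linarith
  have hA : A' = A * ((y:ℚ)+1-r)/((y:ℚ)+1) := by
    field_simp; linarith
  subst hC hB hA
  clear h1 h2 h3 n1
  generalize hq : (m:ℚ)+m'-2*y = q at *
  field_simp
  rw [← hq]
  ring

lemma SS_rec (m m' M N y : ℕ) (hM : M ≤ m) (hy : y + 1 ≤ m + 1) (hy' : y + 1 ≤ m')
    (hN : N ≤ m') :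
    SS (m+1) m' M N (y+1) =
      (((m:ℚ)+m'+1-y)*((m:ℚ)-y)/(((m:ℚ)+1)*((m:ℚ)+m'-2*y))) * SS m m' M N (y+1)
      + (((y:ℚ)+1)*((m':ℚ)-y)/(((m:ℚ)+1)*((m:ℚ)+m'-2*y))) * SS m m' M N y := by
  unfold SS
  rw [Finset.mul_sum, Finset.mul_sum, ← Finset.sum_add_distrib]
  apply Finset.sum_congr rfl
  intro r hr
  rw [Finset.mem_range] at hr
  exact TT_rec m m' M N y r hM hy hy' hN (by omega)

lemma base_partial (m m' x R : ℕ) (hR : R ≤ min m m') :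
    ∑ r ∈ Finset.range (R+1), TT m m' m m' x r =
      raise (-(x:ℤ)+1) R * raise ((x:ℤ) - (m + m') - 1 + 1) R /
        ((Nat.factorial R : ℚ) * raise (-(m:ℤ) - m') R) := by
  induction R with
  | zero => simp [TT, raise]
  | succ R ih =>
    rw [Finset.sum_range_succ, ih (by omega)]
    have n1 := raise_ne (m:ℤ) (R+1) (by omega)
    have n3 := raise_ne (m':ℤ) (R+1) (by omega)
    have n4 := raise_ne ((m:ℤ)+m') (R) (by omega)
    have n5 : (Nat.factorial R : ℚ) ≠ 0 := by positivity
    have n6 : -((m:ℚ)+m') + R ≠ 0 := by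
      have : -((m:ℤ)+m') + R ≠ 0 := by omega
      exact_mod_cast this
    have n7 : (R:ℚ)+1 ≠ 0 := by positivity
    unfold TT
    rw [show -(m:ℤ) - m' = -((m:ℤ)+m') by ring]
    rw [raise_succ_l (-(x:ℤ)), raise_succ_l ((x:ℤ) - (m + m') - 1),
      raise_succ_r (-(x:ℤ)+1), raise_succ_r ((x:ℤ) - (m + m') - 1+1), raise_succ_r (-((m:ℤ)+m')),
      Nat.factorial_succ]
    generalize raise (-(m:ℤ)) (R+1) = C at *
    generalize raise (-(m':ℤ)) (R+1) = D at *
    generalize raise (-((m:ℤ)+m')) R = E at *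
    generalize raise (-(x:ℤ)+1) R = A at *
    generalize raise ((x:ℤ) - (m + m') - 1+1) R = B at *
    push_cast
    generalize hq : -((m:ℚ)+m') + R = q at *
    have : (R:ℚ) = q + m + m' := by linarith
    field_simp
    subst hq
    ring

lemma SS_base (m m' x : ℕ) (hx : 1 ≤ x) (h1 : x ≤ m) (h2 : x ≤ m') : SS m m' m m' x = 0 := by
  unfold SS
  rw [base_partial m m' x _ le_rfl]
  obtain ⟨y, rfl⟩ : ∃ y, x = y + 1 := ⟨x-1, by omega⟩
  rw [show -((y+1:ℕ):ℤ)+1 = -(y:ℤ) by push_cast; ring, raise_zero_of y _ (by omega)]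
  simp

lemma SS_step (m m' M N k x : ℕ) (hM : M ≤ m) (hN : N ≤ m') (h1 : x ≤ m + 1) (h2 : x ≤ m')
    (ih : ∀ x, x ≤ m → x ≤ m' → (x ≤ k → 0 < SS m m' M N x) ∧ (k < x → SS m m' M N x = 0)) :
    (x ≤ k + 1 → 0 < SS (m+1) m' M N x) ∧ (k + 1 < x → SS (m+1) m' M N x = 0) := by
  obtain _ | y := x
  · rw [SS_zero]; simp
  rw [SS_rec m m' M N y hM h1 h2 hN]
  have g1 : (y:ℚ) ≤ m := by exact_mod_cast (by omega : y ≤ m)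
  have g2 : (y:ℚ) + 1 ≤ m' := by exact_mod_cast h2
  have g0 : (0:ℚ) ≤ m := by positivity
  have p1 : 0 < ((m:ℚ)+1)*((m:ℚ)+m'-2*y) := mul_pos (by linarith) (by linarith)
  have hβ : 0 < (((y:ℚ)+1)*((m':ℚ)-y)/(((m:ℚ)+1)*((m:ℚ)+m'-2*y))) :=
    div_pos (mul_pos (by positivity) (by linarith)) p1
  have hα : 0 ≤ (((m:ℚ)+m'+1-y)*((m:ℚ)-y)/(((m:ℚ)+1)*((m:ℚ)+m'-2*y))) :=
    div_nonneg (mul_nonneg (by linarith) (by linarith)) p1.le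
  obtain ⟨i1, i2⟩ := ih y (by omega) (by omega)
  have key : 0 ≤ (((m:ℚ)+m'+1-y)*((m:ℚ)-y)/(((m:ℚ)+1)*((m:ℚ)+m'-2*y))) * SS m m' M N (y+1) ∧
      (k < y + 1 → (((m:ℚ)+m'+1-y)*((m:ℚ)-y)/(((m:ℚ)+1)*((m:ℚ)+m'-2*y))) * SS m m' M N (y+1) = 0) := by
    by_cases hym : y = m
    · subst hym; simp
    · obtain ⟨j1, j2⟩ := ih (y+1) (by omega) (by omega)
      refine ⟨mul_nonneg hα ?_, fun h => by rw [j2 h, mul_zero]⟩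
      rcases Nat.lt_or_ge k (y+1) with h | h
      · rw [j2 h]
      · exact (j1 h).le
  constructor
  · intro h
    have := mul_pos hβ (i1 (by omega))
    linarith [key.1]
  · intro h
    rw [key.2 (by omega), i2 (by omega)]
    simp

lemma SS_main (k : ℕ) : ∀ m m' M N x : ℕ, M ≤ m → N ≤ m' → m + m' = M + N + k → x ≤ m → x ≤ m' →
    (x ≤ k → 0 < SS m m' M N x) ∧ (k < x → SS m m' M N x = 0) := by
  induction k with
  | zero =>
    intro m m' M N x hM hN h h1 h2
    obtain rfl : M = m := by omega
    obtain rfl : N = m' := by omega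
    refine ⟨fun h => ?_, fun h => SS_base _ _ _ h h1 h2⟩
    obtain rfl : x = 0 := by omega
    rw [SS_zero]; norm_num
  | succ k ih =>
    intro m m' M N x hM hN h h1 h2
    by_cases hMm : M < m
    · obtain ⟨m, rfl⟩ : ∃ a, m = a + 1 := ⟨m-1, by omega⟩
      exact SS_step m m' M N k x (by omega) hN h1 h2
        (fun x a b => ih m m' M N x (by omega) hN (by omega) a b)
    · obtain ⟨m', rfl⟩ : ∃ a, m' = a + 1 := ⟨m'-1, by omega⟩
      rw [SS_symm]
      exact SS_step m' m N M k x (by omega) hM h2 h1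
        (fun x a b => ih m' m N M x (by omega) hM (by omega) a b)

lemma sum_eq (n m M N x : ℕ) (hm : m ≤ n) :
    ∑ r ∈ Finset.range (min x (min M N) + 1), hgTerm n m M N (-(x : ℤ)) ((x : ℤ) - n - 1) r
      = SS m (n-m) M N x := by
  have hT : ∀ r, hgTerm n m M N (-(x : ℤ)) ((x : ℤ) - n - 1) r = TT m (n-m) M N x r := by
    intro r
    unfold hgTerm TT
    rw [show (m:ℤ) - n = -((n-m:ℕ):ℤ) by omega, show (m:ℤ) + ((n-m:ℕ):ℤ) = n by omega]
  unfold SS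
  simp only [hT]
  apply Finset.sum_subset
  · intro r; simp only [Finset.mem_range]; omega
  · intro r h1 h2
    simp only [Finset.mem_range] at h1 h2
    unfold TT
    rw [raise_zero_of x r (by omega)]
    simp

theorem racah_support
    (n m k l x : ℕ) (hm : m ≤ n / 2) (hk : k ≤ n)
    (hl : m + k ≤ n + l) (hlm : l ≤ m) (hlk : l ≤ k) (hx : x ≤ m) :
    (0 < pone n m k l x ↔ x ≤ min k m) ∧ (k < x → pone n m k l x = 0) := by
  unfold pone
  rw [sum_eq n m _ _ x (by omega)]
  obtain ⟨h1, h2⟩ := SS_main k m (n-m) (m-l) (n+l-m-k) x (by omega) (by omega) (by omega) hx (by omega)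
  have c1 : (0:ℚ) < Nat.choose (n - k) (m - l) := by
    exact_mod_cast Nat.choose_pos (by omega)
  have c2 : (0:ℚ) < Nat.choose n x := by
    exact_mod_cast Nat.choose_pos (by omega)
  have c3 : (0:ℚ) < Nat.choose n m := by
    exact_mod_cast Nat.choose_pos (by omega)
  have c4 : (2:ℚ) * x ≤ n := by exact_mod_cast (by omega : 2 * x ≤ n)
  have c5 : (0:ℚ) ≤ x := by positivity
  have c6 : (0:ℚ) < ((n : ℚ) - 2 * x + 1) / ((n : ℚ) - x + 1) :=
    div_pos (by linarith) (by linarith)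
  have hP := mul_pos (mul_pos c1 (div_pos c2 c3)) c6
  refine ⟨⟨fun h => ?_, fun h => mul_pos hP (h1 (by omega))⟩, fun h => by rw [h2 h, mul_zero]⟩
  by_contra hc
  rw [h2 (by omega), mul_zero] at h
  exact lt_irrefl _ h
end
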